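/- Let (Ω, 𝒜, P) be a probability space and 𝒢 a sub-σ-algebra. Let X be a real random variable with X and X² integrable, and let η be a bounded, nonnegative, 𝒢-measurable random variable such that η·(X − E[X | 𝒢]) ≤ 1.79 almost surely. Set μ = E[X | 𝒢] and α = η·E[(X − μ)² | 𝒢]. Then E[ exp(η·(X − μ − α)) | 𝒢 ] ≤ 1 almost surely. -/

import Mathlib

open MeasureTheory

/-!
Since `exp x ≤ 1 + x + x²` for `x ≤ 1.79`, a conditionally centred `U ≤ 1.79` satisfies
`E[exp U | 𝒢] ≤ 1 + E[U² | 𝒢] ≤ exp E[U² | 𝒢]`. Dividing by the `𝒢`-measurable right-hand side and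
taking `U = η (X - μ)`, for which `E[U² | 𝒢] = η α`, gives the bound for bounded `η`. For unbounded
`η` the exponential is still bounded, and conditional expectations can be compared on each of the
`𝒢`-measurable sets `{|η| ≤ n}`, where `η` agrees with its truncation.
-/

lemma exp_one_point_seven_nine_le : Real.exp 1.79 ≤ 1 + 1.79 + 1.79 ^ 2 := by
  have exp_fractional_part : Real.exp 0.79 ≤ 2.2036 := by
    refine (Real.exp_bound' (n := 8) (by norm_num) (by norm_num) (by norm_num)).trans ?_
    norm_num [Finset.sum_range_succ, Nat.factorial]
  calc Real.exp 1.79 = Real.exp 1 * Real.exp 0.79 := by rw [← Real.exp_add]; norm_num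
    _ ≤ 2.7182818286 * 2.2036 := by gcongr; exact Real.exp_one_lt_d9.le
    _ ≤ 1 + 1.79 + 1.79 ^ 2 := by norm_num

lemma one_add_add_sq_le_mul_exp_sub {x a : ℝ} (hx : 1 ≤ x) (hxa : x ≤ a) :
    1 + a + a ^ 2 ≤ (1 + x + x ^ 2) * Real.exp (a - x) := by
  obtain ⟨t, rfl⟩ : ∃ t, a = x + t := ⟨a - x, by ring⟩
  have ht : 0 ≤ t := by linarith
  have hsq : x ≤ x ^ 2 := by nlinarith
  calc 1 + (x + t) + (x + t) ^ 2
    _ ≤ 1 + (x + t) + (x + t) ^ 2 + t * (x ^ 2 - x) + t ^ 2 * ((x ^ 2 + x - 1) / 2) := by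
      have := mul_nonneg ht (sub_nonneg.2 hsq)
      have := mul_nonneg (sq_nonneg t) (show 0 ≤ (x ^ 2 + x - 1) / 2 by linarith)
      linarith
    _ = (1 + x + x ^ 2) * (1 + t + t ^ 2 / 2) := by ring
    _ ≤ (1 + x + x ^ 2) * Real.exp (x + t - x) := by
      rw [add_sub_cancel_left]
      gcongr
      exact Real.quadratic_le_exp_of_nonneg ht

lemma exp_le_one_add_add_sq_of_le {x a : ℝ} (hxa : x ≤ a) (ha : Real.exp a ≤ 1 + a + a ^ 2) :
    Real.exp x ≤ 1 + x + x ^ 2 := by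
  rcases le_total x (-1) with hx | hx
  · have : Real.exp x ≤ 1 := Real.exp_le_one_iff.2 (by linarith)
    nlinarith
  rcases le_total x 1 with hx' | hx'
  · linarith [(abs_le.1 (Real.abs_exp_sub_one_sub_id_le (abs_le.2 ⟨hx, hx'⟩))).2]
  · refine le_of_mul_le_mul_right ?_ (Real.exp_pos (a - x))
    calc Real.exp x * Real.exp (a - x) = Real.exp a := by rw [← Real.exp_add, add_sub_cancel]
      _ ≤ 1 + a + a ^ 2 := ha
      _ ≤ (1 + x + x ^ 2) * Real.exp (a - x) := one_add_add_sq_le_mul_exp_sub hx' hxa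

section CondExp

variable {Ω : Type*} {G m : MeasurableSpace Ω} {P : Measure Ω}

lemma condExp_ae_eq_restrict_of_ae_eq_restrict {E : Type*} [NormedAddCommGroup E]
    [NormedSpace ℝ E] [CompleteSpace E] {f g : Ω → E} {s : Set Ω} (hf : Integrable f P)
    (hg : Integrable g P) (hs : MeasurableSet[G] s) (hfg : f =ᵐ[P.restrict s] g) :
    P[f | G] =ᵐ[P.restrict s] P[g | G] := by
  have hsub : P[f - g | G] =ᵐ[P.restrict s] 0 :=
    condExp_ae_eq_restrict_zero hs (hfg.mono fun ω hω => sub_eq_zero.2 hω)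
  filter_upwards [hsub, ae_restrict_of_ae (condExp_sub hf hg G)] with ω h₀ h
  rw [h] at h₀
  exact sub_eq_zero.1 h₀

lemma condExp_sub_condExp_ae_eq_zero {E : Type*} [NormedAddCommGroup E] [NormedSpace ℝ E]
    [CompleteSpace E] {X : Ω → E} (hG : G ≤ m) [SigmaFinite (P.trim hG)] (hX : Integrable X P) :
    P[X - P[X | G] | G] =ᵐ[P] 0 := by
  have hidem : P[P[X | G] | G] = P[X | G] :=
    condExp_of_stronglyMeasurable hG stronglyMeasurable_condExp integrable_condExp
  simpa only [hidem, sub_self]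
    using condExp_sub hX (integrable_condExp (f := X) (m := G)) G

variable [IsFiniteMeasure P] {U Z η : Ω → ℝ}

lemma integrable_exp_of_ae_le {c : ℝ} (hU : AEMeasurable U P) (hUc : ∀ᵐ ω ∂P, U ω ≤ c) :
    Integrable (fun ω => Real.exp (U ω)) P := by
  simpa using ProbabilityTheory.integrable_exp_mul_of_le 1 c zero_le_one hU hUc

lemma condExp_exp_le_one_add_condExp_sq (hG : G ≤ m) (hU : MemLp U 2 P) (hU₀ : P[U | G] ≤ᵐ[P] 0)
    (hUle : ∀ᵐ ω ∂P, U ω ≤ 1.79) :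
    P[fun ω => Real.exp (U ω) | G] ≤ᵐ[P] 1 + P[U ^ 2 | G] := by
  have hU_int : Integrable U P := hU.integrable one_le_two
  have hU2_int : Integrable (U ^ 2) P := hU.integrable_sq
  have h1U_int : Integrable ((fun _ => 1) + U) P := (integrable_const 1).add hU_int
  have hexp_le : (fun ω => Real.exp (U ω)) ≤ᵐ[P] (fun _ => 1) + U + U ^ 2 :=
    hUle.mono fun ω hω => exp_le_one_add_add_sq_of_le hω exp_one_point_seven_nine_le
  filter_upwards [hU₀, condExp_add h1U_int hU2_int G,
    condExp_add (integrable_const (1 : ℝ)) hU_int G,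
    condExp_mono (m := G) (integrable_exp_of_ae_le hU.aemeasurable hUle)
      (h1U_int.add hU2_int) hexp_le] with ω h₀ hadd hadd' hle
  simp only [hadd, hadd', condExp_const hG, Pi.add_apply, Pi.zero_apply, Pi.one_apply] at h₀ hle ⊢
  linarith

lemma condExp_exp_sub_condExp_sq_le_one (hG : G ≤ m) (hU : MemLp U 2 P) (hU₀ : P[U | G] ≤ᵐ[P] 0)
    (hUle : ∀ᵐ ω ∂P, U ω ≤ 1.79) :
    P[fun ω => Real.exp (U ω - P[U ^ 2 | G] ω) | G] ≤ᵐ[P] 1 := by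
  have hexp_int : Integrable (fun ω => Real.exp (U ω)) P :=
    integrable_exp_of_ae_le hU.aemeasurable hUle
  have hfactor : (fun ω => Real.exp (U ω - P[U ^ 2 | G] ω)) =
      (fun ω => Real.exp (-P[U ^ 2 | G] ω)) * fun ω => Real.exp (U ω) := by
    ext ω
    rw [Pi.mul_apply, ← Real.exp_add, sub_eq_neg_add]
  have hweight_meas : StronglyMeasurable[G] fun ω => Real.exp (-P[U ^ 2 | G] ω) :=
    Real.continuous_exp.comp_stronglyMeasurable stronglyMeasurable_condExp.neg
  have hweight_le : ∀ᵐ ω ∂P, ‖Real.exp (-P[U ^ 2 | G] ω)‖ ≤ 1 := by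
    filter_upwards [condExp_nonneg (m := G) (ae_of_all P fun ω => sq_nonneg (U ω))] with ω hω
    rw [Real.norm_eq_abs, Real.abs_exp]
    exact Real.exp_le_one_iff.2 (neg_nonpos.2 hω)
  rw [hfactor]
  filter_upwards [condExp_stronglyMeasurable_mul_of_bound₀ hG hweight_meas.aestronglyMeasurable
    hexp_int 1 hweight_le, condExp_exp_le_one_add_condExp_sq hG hU hU₀ hUle] with ω hpull hle
  rw [hpull, Pi.mul_apply]
  calc Real.exp (-P[U ^ 2 | G] ω) * P[fun ω => Real.exp (U ω) | G] ω
    _ ≤ Real.exp (-P[U ^ 2 | G] ω) * Real.exp (P[U ^ 2 | G] ω) := by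
      gcongr
      exact hle.trans (by simpa only [Pi.add_apply, Pi.one_apply, add_comm]
        using Real.add_one_le_exp (P[U ^ 2 | G] ω))
    _ = 1 := by rw [← Real.exp_add, neg_add_cancel, Real.exp_zero]

lemma condExp_exp_mul_sub_le_one_of_bounded (hG : G ≤ m) (hZ : MemLp Z 2 P)
    (hZ₀ : P[Z | G] =ᵐ[P] 0) (hη : StronglyMeasurable[G] η) {C : ℝ} (hηC : ∀ ω, ‖η ω‖ ≤ C)
    (hle : ∀ᵐ ω ∂P, η ω * Z ω ≤ 1.79) :
    P[fun ω => Real.exp (η ω * (Z ω - η ω * P[Z ^ 2 | G] ω)) | G] ≤ᵐ[P] 1 := by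
  have hηZ : MemLp (η * Z) 2 P :=
    hZ.mul (memLp_top_of_bound (hη.mono hG).aestronglyMeasurable C (ae_of_all P hηC))
  have hηZ₀ : P[η * Z | G] ≤ᵐ[P] 0 := by
    filter_upwards [hZ₀, condExp_mul_of_stronglyMeasurable_left hη (hηZ.integrable one_le_two)
      (hZ.integrable one_le_two)] with ω hω hpull
    simp [hpull, hω]
  have hsq : P[(η * Z) ^ 2 | G] =ᵐ[P] η ^ 2 * P[Z ^ 2 | G] := by
    rw [mul_pow]
    exact condExp_mul_of_stronglyMeasurable_left (hη.pow 2) (mul_pow η Z 2 ▸ hηZ.integrable_sq)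
      hZ.integrable_sq
  refine .trans (condExp_congr_ae ?_).le (condExp_exp_sub_condExp_sq_le_one hG hηZ hηZ₀ hle)
  filter_upwards [hsq] with ω hω
  rw [hω, Pi.mul_apply, Pi.mul_apply, Pi.pow_apply]
  ring_nf

lemma integrable_exp_mul_sub (hG : G ≤ m) (hZ : AEStronglyMeasurable Z P)
    (hη : StronglyMeasurable[G] η) {c : ℝ} (hle : ∀ᵐ ω ∂P, η ω * Z ω ≤ c) :
    Integrable (fun ω => Real.exp (η ω * (Z ω - η ω * P[Z ^ 2 | G] ω))) P := by
  have hη_meas : AEMeasurable η P := (hη.mono hG).aestronglyMeasurable.aemeasurable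
  refine integrable_exp_of_ae_le (c := c) (hη_meas.mul (hZ.aemeasurable.sub
    (hη_meas.mul integrable_condExp.aemeasurable))) ?_
  filter_upwards [hle, condExp_nonneg (m := G) (ae_of_all P fun ω => sq_nonneg (Z ω))] with ω hω hW
  calc η ω * (Z ω - η ω * P[Z ^ 2 | G] ω) = η ω * Z ω - η ω ^ 2 * P[Z ^ 2 | G] ω := by ring
    _ ≤ η ω * Z ω := sub_le_self _ (mul_nonneg (sq_nonneg _) hW)
    _ ≤ c := hω

lemma condExp_exp_mul_sub_le_one_of_norm_le (hG : G ≤ m) (hZ : MemLp Z 2 P)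
    (hZ₀ : P[Z | G] =ᵐ[P] 0) (hη : StronglyMeasurable[G] η) (hle : ∀ᵐ ω ∂P, η ω * Z ω ≤ 1.79)
    (C : ℝ) :
    ∀ᵐ ω ∂P, ‖η ω‖ ≤ C →
      P[fun ω' => Real.exp (η ω' * (Z ω' - η ω' * P[Z ^ 2 | G] ω')) | G] ω ≤ 1 := by
  let s : Set Ω := {ω | ‖η ω‖ ≤ C}
  have hs : MeasurableSet[G] s := hη.norm.measurable measurableSet_Iic
  let ζ : Ω → ℝ := s.indicator η
  have hζ : StronglyMeasurable[G] ζ := hη.indicator hs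
  have hζ_bdd (ω : Ω) : ‖ζ ω‖ ≤ |C| := by
    by_cases hω : ω ∈ s
    · simpa only [ζ, Set.indicator_of_mem hω] using le_trans hω (le_abs_self C)
    · simp [ζ, hω]
  have hζ_le : ∀ᵐ ω ∂P, ζ ω * Z ω ≤ 1.79 := by
    filter_upwards [hle] with ω h
    by_cases hω : ω ∈ s
    · simpa only [ζ, Set.indicator_of_mem hω] using h
    · norm_num [ζ, hω]
  have heq := condExp_ae_eq_restrict_of_ae_eq_restrict
    (integrable_exp_mul_sub hG hZ.aestronglyMeasurable hη hle)
    (integrable_exp_mul_sub hG hZ.aestronglyMeasurable hζ hζ_le) hs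
    (ae_restrict_of_forall_mem (hG _ hs) fun ω hω => by simp only [ζ, Set.indicator_of_mem hω])
  filter_upwards [(ae_restrict_iff' (hG _ hs)).1 heq,
    condExp_exp_mul_sub_le_one_of_bounded hG hZ hZ₀ hζ hζ_bdd hζ_le] with ω h h' hω
  exact (h hω).trans_le h'

lemma condExp_exp_mul_sub_le_one (hG : G ≤ m) (hZ : MemLp Z 2 P) (hZ₀ : P[Z | G] =ᵐ[P] 0)
    (hη : StronglyMeasurable[G] η) (hle : ∀ᵐ ω ∂P, η ω * Z ω ≤ 1.79) :
    P[fun ω => Real.exp (η ω * (Z ω - η ω * P[Z ^ 2 | G] ω)) | G] ≤ᵐ[P] 1 := by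
  have hle_on (n : ℕ) := condExp_exp_mul_sub_le_one_of_norm_le hG hZ hZ₀ hη hle n
  filter_upwards [ae_all_iff.2 hle_on] with ω hω
  obtain ⟨n, hn⟩ := exists_nat_ge ‖η ω‖
  exact hω n hn

end CondExp

theorem conditional_mgf_bound_general
    {Ω : Type*} {G m : MeasurableSpace Ω} {P : Measure Ω} [IsFiniteMeasure P] (hG : G ≤ m)
    {X η : Ω → ℝ} (hX : MemLp X 2 P) (hη : StronglyMeasurable[G] η)
    (hle : ∀ᵐ ω ∂P, η ω * (X ω - P[X | G] ω) ≤ 1.79) :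
    P[fun ω => Real.exp (η ω * (X ω - P[X | G] ω
      - η ω * P[fun ω' => (X ω' - P[X | G] ω') ^ 2 | G] ω)) | G] ≤ᵐ[P] 1 :=
  condExp_exp_mul_sub_le_one hG (hX.sub (hX.condExp one_le_two))
    (condExp_sub_condExp_ae_eq_zero hG (hX.integrable one_le_two)) hη hle

/-- Single-step conditional MGF bound: for `μ = E[X|𝒢]` and
`α = η·E[(X − μ)²|𝒢]`, with `η` nonnegative, bounded, `𝒢`-measurable and
`η·(X − μ) ≤ 1.79` a.s., we have `E[exp(η·(X − μ − α)) | 𝒢] ≤ 1` a.s. -/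
theorem conditional_mgf_bound
    {Ω : Type*} {m : MeasurableSpace Ω} {P : Measure Ω} [IsProbabilityMeasure P]
    (G : MeasurableSpace Ω) (hG : G ≤ m)
    (X η : Ω → ℝ)
    (hX_int : Integrable X P)
    (hX2_int : Integrable (fun ω => (X ω) ^ 2) P)
    (hη_meas : StronglyMeasurable[G] η)
    (hη_bdd : ∃ C : ℝ, ∀ ω, |η ω| ≤ C)
    (hη_nonneg : ∀ᵐ ω ∂P, 0 ≤ η ω)
    (hbound : ∀ᵐ ω ∂P, η ω * (X ω - (P[X | G]) ω) ≤ 1.79) :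
    ∀ᵐ ω ∂P,
      (P[fun ω' => Real.exp (η ω' * (X ω' - (P[X | G]) ω'
          - η ω' * (P[fun z => (X z - (P[X | G]) z) ^ 2 | G]) ω')) | G]) ω ≤ 1 := by
  exact conditional_mgf_bound_general hG
    ((memLp_two_iff_integrable_sq hX_int.aestronglyMeasurable).2 hX2_int) hη_meas hbound
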